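/- Fix γ ∈ (0,1/2). Let N be a large integer, R = N^γ, w = log log log N, W = ∏_{p ≤ w} p, and W̄ = ∏_{p ≤ w} p^{ι(p)} where ι(p) is defined by p^{ι(p)−1} < (log N)^{C_1+1} ≤ p^{ι(p)} for a fixed constant C_1 > 1; assume W̄ < N^γ − 1. Let χ : ℝ → [0,1] be a smooth even function supported on [−1,1] with χ(0) = 1, and set Λ_{χ,R}(n) = log R·(Σ_{ℓ ∣ n} μ(ℓ)·χ(log ℓ / log R))². Let Λ' = 1_{𝒫∖[N^{2γ}]}·log (i.e. Λ'(n) = log n if n is a prime greater than N^{2γ} and 0 otherwise), and for b ∈ {1,…,W̄} set Λ'_{b,W̄}(n) = (φ(W)/W)·Λ'(W̄n + b) and ν_{GT,b}(n) = (φ(W)/W)·Λ_{χ,R}(W̄n + b). Then there is a constant c depending only on γ such that for every b ∈ {1,…,W̄} coprime to W and every n with 1 ≤ n ≤ N/W̄, one has Λ'_{b,W̄}(n) ≤ c·ν_{GT,b}(n). -/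

import Mathlib

open scoped Classical

/-- The primes p ≤ x (listed among the first N+1 integers). -/
noncomputable def primesBelowR (x : ℝ) (N : ℕ) : Finset ℕ :=
  (Finset.range (N + 1)).filter (fun p => p.Prime ∧ (p : ℝ) ≤ x)

/-- w(N) = log log log N. -/
noncomputable def tripleLog (N : ℕ) : ℝ := Real.log (Real.log (Real.log N))

/-- W = ∏_{p ≤ w(N)} p. -/
noncomputable def Wprod (N : ℕ) : ℕ := ∏ p ∈ primesBelowR (tripleLog N) N, p

/-- W̄ = ∏_{p ≤ w(N)} p^{ι(p)}. -/
noncomputable def WbarProd (N : ℕ) (ι : ℕ → ℕ) : ℕ :=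
  ∏ p ∈ primesBelowR (tripleLog N) N, p ^ ι p

/-- The Goldston–Yıldırım truncated divisor sum Λ_{χ,R}. -/
noncomputable def lambdaChi (χ : ℝ → ℝ) (R : ℝ) (m : ℕ) : ℝ :=
  Real.log R *
    (∑ ℓ ∈ m.divisors, (ArithmeticFunction.moebius ℓ : ℝ) * χ (Real.log ℓ / Real.log R)) ^ 2

/-- Λ' = 1_{𝒫 ∖ [N^{2γ}]}·log. -/
noncomputable def lambdaPrimeTrunc (γ : ℝ) (N : ℕ) (m : ℕ) : ℝ :=
  if m.Prime ∧ (N : ℝ) ^ (2 * γ) < (m : ℝ) then Real.log m else 0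

/-!
Write `R = N ^ γ`. At a prime `p > R` the divisor sum in `Λ_{χ,R}(p)` reduces to its term `ℓ = 1`,
because `χ` vanishes beyond `1`; hence `Λ_{χ,R}(p) = log R = γ log N`. The shifted argument
`m = W̄ n + b` is less than `N + R`, so if also `m > R ^ 2`, then `R (R - 1) < N`. As `R > 2` this
gives `R < N` and `m < 2 N ≤ N ^ 2`, so that `log m ≤ 2 log N = (2 / γ) log R`.
-/

theorem lambdaChi_nonneg (χ : ℝ → ℝ) {R : ℝ} (hR : 1 ≤ R) (m : ℕ) : 0 ≤ lambdaChi χ R m :=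
  mul_nonneg (Real.log_nonneg hR) (sq_nonneg _)

theorem lambdaChi_prime_of_lt {χ : ℝ → ℝ} (hsupp : ∀ x, 1 < x → χ x = 0) (hχ0 : χ 0 = 1)
    {R : ℝ} (hR : 1 < R) {p : ℕ} (hp : p.Prime) (hRp : R < p) :
    lambdaChi χ R p = Real.log R := by
  have hχp : χ (Real.log p / Real.log R) = 0 :=
    hsupp _ ((one_lt_div (Real.log_pos hR)).2 (Real.log_lt_log (one_pos.trans hR) hRp))
  simp [lambdaChi, hp.sum_divisors, hχp, hχ0]

theorem lambdaPrimeTrunc_le_mul_lambdaChi {χ : ℝ → ℝ} (hsupp : ∀ x, 1 < x → χ x = 0)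
    (hχ0 : χ 0 = 1) {γ c : ℝ} (hc : 0 ≤ c) {N m : ℕ} (hR : 1 < (N : ℝ) ^ γ)
    (hlog : (N : ℝ) ^ (2 * γ) < m → Real.log m ≤ c * Real.log ((N : ℝ) ^ γ)) :
    lambdaPrimeTrunc γ N m ≤ c * lambdaChi χ ((N : ℝ) ^ γ) m := by
  unfold lambdaPrimeTrunc
  split_ifs with h
  · obtain ⟨hprime, hlarge⟩ := h
    have hRm : (N : ℝ) ^ γ < m := calc
      (N : ℝ) ^ γ < ((N : ℝ) ^ γ) ^ 2 := lt_self_pow₀ hR one_lt_two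
      _ = (N : ℝ) ^ (2 * γ) := by rw [mul_comm, Real.rpow_mul N.cast_nonneg, Real.rpow_two]
      _ < m := hlarge
    rw [lambdaChi_prime_of_lt hsupp hχ0 hR hprime hRm]
    exact hlog hlarge
  · exact mul_nonneg hc (lambdaChi_nonneg χ hR.le m)

theorem lt_sq_of_sq_lt_of_lt_add {N R x : ℝ} (hR : 2 < R) (hRx : R ^ 2 < x) (hxN : x < N + R) :
    x < N ^ 2 := by
  have hRN : R < N := by nlinarith
  nlinarith

theorem log_le_two_div_mul_log_rpow {γ : ℝ} (hγ : 0 < γ) {N m : ℕ} (hR : 2 < (N : ℝ) ^ γ)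
    (hlarge : (N : ℝ) ^ (2 * γ) < m) (hm : (m : ℝ) < N + (N : ℝ) ^ γ) :
    Real.log m ≤ 2 / γ * Real.log ((N : ℝ) ^ γ) := by
  have hN : (0 : ℝ) < N := N.cast_nonneg.lt_of_ne' fun h ↦ by
    rw [h, Real.zero_rpow hγ.ne'] at hR
    linarith
  have hm0 : (0 : ℝ) < m := (Real.rpow_pos_of_pos hN _).trans hlarge
  rw [mul_comm 2 γ, Real.rpow_mul hN.le, Real.rpow_two] at hlarge
  calc
    Real.log m ≤ Real.log ((N : ℝ) ^ 2) :=
      Real.log_le_log hm0 (lt_sq_of_sq_lt_of_lt_add hR hlarge hm).le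
    _ = 2 / γ * Real.log ((N : ℝ) ^ γ) := by
      rw [Real.log_pow, Real.log_rpow hN]
      push_cast
      field_simp

/-- `V` plays the role of `W̄` and `κ` that of `φ(W) / W`. -/
theorem statement9_general {γ : ℝ} (hγ : 0 < γ) {χ : ℝ → ℝ} (hsupp : ∀ x, 1 < x → χ x = 0)
    (hχ0 : χ 0 = 1) {N V b n : ℕ} (hV : 0 < V) (hVN : (V : ℝ) < (N : ℝ) ^ γ - 1) (hb : b ≤ V)
    (hn : (n : ℝ) ≤ N / V) {κ : ℝ} (hκ : 0 ≤ κ) :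
    κ * lambdaPrimeTrunc γ N (V * n + b) ≤
      2 / γ * (κ * lambdaChi χ ((N : ℝ) ^ γ) (V * n + b)) := by
  have hR : 2 < (N : ℝ) ^ γ := by
    have : (1 : ℝ) ≤ V := Nat.one_le_cast.2 hV
    linarith
  have hm : ((V * n + b : ℕ) : ℝ) < N + (N : ℝ) ^ γ := by
    have hVn : (V : ℝ) * n ≤ N := (le_div_iff₀' (Nat.cast_pos.2 hV)).1 hn
    have hbV : (b : ℝ) ≤ V := Nat.cast_le.2 hb
    push_cast
    linarith
  rw [mul_left_comm]
  gcongr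
  exact lambdaPrimeTrunc_le_mul_lambdaChi hsupp hχ0 (by positivity) (one_lt_two.trans hR)
    fun hlarge ↦ log_le_two_div_mul_log_rpow hγ hR hlarge hm

/-- the Goldston–Yıldırım majorant dominates the W̄-tricked
truncated von Mangoldt function. -/
theorem statement9 (γ : ℝ) (hγ0 : 0 < γ) (hγ : γ < 1 / 2) (C1 : ℝ) (hC1 : 1 < C1) :
    ∃ c : ℝ, 0 < c ∧
      ∀ N : ℕ, 2 ≤ N →
      ∀ ι : ℕ → ℕ,
        (∀ p ∈ primesBelowR (tripleLog N) N,
          (p : ℝ) ^ ((ι p : ℤ) - 1) < (Real.log N) ^ (C1 + 1) ∧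
          (Real.log N) ^ (C1 + 1) ≤ (p : ℝ) ^ (ι p)) →
      ((WbarProd N ι : ℝ) < (N : ℝ) ^ γ - 1) →
      ∀ χ : ℝ → ℝ, ContDiff ℝ (⊤ : ℕ∞) χ → (∀ x, χ (-x) = χ x) →
        (∀ x, 1 < |x| → χ x = 0) → (∀ x, 0 ≤ χ x ∧ χ x ≤ 1) → χ 0 = 1 →
      ∀ b : ℕ, 1 ≤ b → b ≤ WbarProd N ι → Nat.Coprime b (Wprod N) →
      ∀ n : ℕ, 1 ≤ n → (n : ℝ) ≤ (N : ℝ) / (WbarProd N ι : ℝ) →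
        ((Wprod N).totient : ℝ) / (Wprod N : ℝ) *
            lambdaPrimeTrunc γ N (WbarProd N ι * n + b)
          ≤ c * (((Wprod N).totient : ℝ) / (Wprod N : ℝ) *
              lambdaChi χ ((N : ℝ) ^ γ) (WbarProd N ι * n + b)) := by
  exact ⟨2 / γ, by positivity, fun N _ ι _ hW χ _ _ hsupp _ hχ0 b hb1 hbW _ n _ hn ↦
    statement9_general hγ0 (fun x hx ↦ hsupp x (hx.trans_le (le_abs_self x))) hχ0
      (hb1.trans hbW) hW hbW hn (by positivity)⟩
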